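/- For every positive integer k: (i) for every complex s with Re s > 1, one has ζ(s)^k = s Σ_{j=0}^{k-1} a_{j,k}/(s-1)^{j+1} + s ∫_1^∞ Δ_k(x) x^{-s-1} dx, the integral converging absolutely; (ii) the series Σ_{n=0}^∞ (-1)^n ℓ_{n,k} ((s-1)/s)^n converges absolutely for every s with Re s > 1/2 and defines an analytic function there which, for Re s > 1, equals s ∫_1^∞ Δ_k(x) x^{-s-1} dx. -/

import Mathlib

open scoped Real Topology
open Complex Filter MeasureTheory Finset Asymptotics

/-- The analytic extension of `s ↦ ((s-1) * ζ(s))^k` to `s = 1` (where its value is `1`). -/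
noncomputable def zetaPowAux (k : ℕ) : ℂ → ℂ :=
  Function.update (fun s : ℂ => ((s - 1) * riemannZeta s) ^ k) 1 1

/-- `lam k j` is the Taylor coefficient `λ_{j,k}`, i.e. the `j`-th derivative at `s = 1` of the
analytic extension of `(s-1)^k ζ(s)^k`; these numbers are real, and we record their real part. -/
noncomputable def lam (k j : ℕ) : ℝ :=
  (iteratedDeriv j (zetaPowAux k) 1).re

/-- The Fourier coefficients `ℓ_{n,k}` for `n ≥ -k` (an integer index). -/
noncomputable def ell (k : ℕ) (n : ℤ) : ℝ :=
  if 1 ≤ n then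
    (-1 : ℝ) ^ n.toNat *
      ∑ j ∈ Finset.Icc 1 n.toNat,
        ((n.toNat - 1).choose (j - 1) : ℝ) * lam k (j + k) / (Nat.factorial (j + k))
  else
    (-1 : ℝ) ^ k *
      ∑ j ∈ Finset.range ((k + n).toNat + 1),
        ((k - j).choose (-n).toNat : ℝ) * (-1 : ℝ) ^ j * lam k j / (Nat.factorial j)

/-- The Lindelöf Hypothesis: `ζ(1/2 + it) = O(|t|^ε)` for every `ε > 0`. -/
def LindelofHypothesis : Prop :=
  ∀ ε : ℝ, 0 < ε → ∃ C : ℝ, ∀ t : ℝ, 1 ≤ |t| →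
    ‖riemannZeta (1 / 2 + t * Complex.I)‖ ≤ C * |t| ^ ε

/-- `dk k n` is the Piltz divisor function `d_k(n)`: the number of representations of `n` as an
ordered product of `k` positive integers (the `k`-th Dirichlet-convolution power of `ζ`). -/
noncomputable def dk (k n : ℕ) : ℕ := (ArithmeticFunction.zeta ^ k) n

/-- The coefficients `a_{j,k}` of the polynomial `P_k`. -/
noncomputable def aCoef (k j : ℕ) : ℝ :=
  (-1 : ℝ) ^ (k - 1 - j) *
    ∑ i ∈ Finset.range (k - 1 - j + 1), (-1 : ℝ) ^ i * lam k i / (Nat.factorial i)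

/-- The error term `Δ_k(x) = (Σ_{1 ≤ n ≤ x} d_k(n)) - x P_k(log x)` in the Piltz divisor
problem. -/
noncomputable def Deltak (k : ℕ) (x : ℝ) : ℝ :=
  (∑ n ∈ Finset.Icc 1 ⌊x⌋₊, (dk k n : ℝ)) -
    x * ∑ j ∈ Finset.range k, aCoef k j / (Nat.factorial j) * (Real.log x) ^ j

/-- The `n`-th Laguerre polynomial. -/
noncomputable def laguerre (n : ℕ) (u : ℝ) : ℝ :=
  ∑ j ∈ Finset.range (n + 1), (n.choose j : ℝ) * (-1 : ℝ) ^ j * u ^ j / (Nat.factorial j)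

/-- The Bessel function of the first kind of order `0`. -/
noncomputable def besselJ0 (u : ℝ) : ℝ :=
  ∑' m : ℕ, (-1 : ℝ) ^ m * (u / 2) ^ (2 * m) / ((Nat.factorial m : ℝ) ^ 2)

/-- `φ_k(x) = ∫_1^∞ Δ_k(r) J₀(2 √(x log r)) r⁻² dr`. -/
noncomputable def phik (k : ℕ) (x : ℝ) : ℝ :=
  ∫ r in Set.Ioi (1 : ℝ), Deltak k r * besselJ0 (2 * Real.sqrt (x * Real.log r)) / r ^ 2

open ComplexConjugate in
lemma zetaPowAux_conj (k : ℕ) (s : ℂ) : zetaPowAux k (conj s) = conj (zetaPowAux k s) := by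
  rcases eq_or_ne s 1 with rfl | hs
  · simp [zetaPowAux]
  · have hs' : conj s ≠ 1 := fun h => hs (by simpa using congrArg conj h)
    simp [zetaPowAux, Function.update_of_ne hs, Function.update_of_ne hs', riemannZeta_conj]

lemma differentiable_zetaPowAux (k : ℕ) : Differentiable ℂ (zetaPowAux k) := by
  have hne : ∀ s : ℂ, s ≠ 1 → DifferentiableAt ℂ (zetaPowAux k) s := by
    intro s hs
    have h : DifferentiableAt ℂ (fun s : ℂ => ((s - 1) * riemannZeta s) ^ k) s :=
      ((differentiableAt_id.sub_const 1).mul (differentiableAt_riemannZeta hs)).pow k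
    refine h.congr_of_eventuallyEq ?_
    filter_upwards [isOpen_ne.mem_nhds hs] with z hz
    simp [zetaPowAux, Function.update_of_ne hz]
  intro s
  rcases eq_or_ne s 1 with rfl | hs
  · refine (analyticAt_of_differentiable_on_punctured_nhds_of_continuousAt ?_ ?_).differentiableAt
    · filter_upwards [self_mem_nhdsWithin] with t ht using hne t ht
    · rw [zetaPowAux, continuousAt_update_same]
      simpa using riemannZeta_residue_one.pow k
  · exact hne s hs

open ComplexConjugate in
lemma iteratedDeriv_conj_of_conj {f : ℂ → ℂ} (hf : ∀ s, f (conj s) = conj (f s)) (j : ℕ) (s : ℂ) :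
    iteratedDeriv j f (conj s) = conj (iteratedDeriv j f s) := by
  induction j generalizing s with
  | zero => simpa using hf s
  | succ j ih =>
    have h : conj ∘ iteratedDeriv j f ∘ conj = iteratedDeriv j f := by
      funext z; simp [ih]
    rw [iteratedDeriv_succ]
    conv_lhs => rw [← h]
    rw [deriv_conj_conj]
    simp

lemma ofReal_lam (k j : ℕ) : (lam k j : ℂ) = iteratedDeriv j (zetaPowAux k) 1 := by
  rw [lam, ← Complex.conj_eq_iff_re, ← iteratedDeriv_conj_of_conj (zetaPowAux_conj k)]
  simp

/-- The `j`-th Taylor coefficient at `1` of the entire function `zetaPowAux k`. -/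
noncomputable def taylorCoef (k j : ℕ) : ℝ := lam k j / Nat.factorial j

lemma hasSum_taylorCoef (k : ℕ) (w : ℂ) :
    HasSum (fun j : ℕ => (taylorCoef k j : ℂ) * w ^ j) (zetaPowAux k (1 + w)) := by
  refine (Complex.hasSum_taylorSeries_of_entire (differentiable_zetaPowAux k) 1 (1 + w)).congr_fun
    fun j => ?_
  simp only [taylorCoef, Complex.ofReal_div, ofReal_lam, Complex.ofReal_natCast,
    add_sub_cancel_left, smul_eq_mul]
  ring

lemma summable_taylorCoef_add (k m : ℕ) (w : ℂ) :
    Summable fun j : ℕ => (taylorCoef k (j + m) : ℂ) * w ^ j := by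
  rcases eq_or_ne w 0 with rfl | hw
  · refine summable_of_ne_finset_zero (s := {0}) fun j hj => ?_
    have : j ≠ 0 := by simpa using hj
    simp [this]
  · have h := ((summable_nat_add_iff m).2 (hasSum_taylorCoef k w).summable).mul_right (w ^ m)⁻¹
    refine h.congr fun j => ?_
    rw [pow_add]
    field_simp

lemma sum_aCoef (k : ℕ) (hk : 0 < k) (w : ℂ) (hw : w ≠ 0) :
    (1 + w) * ∑ j ∈ Finset.range k, (aCoef k j : ℂ) / w ^ (j + 1) =
      (∑ i ∈ Finset.range k, (taylorCoef k i : ℂ) * w ^ i) / w ^ k + (aCoef k 0 : ℂ) := by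
  obtain ⟨b, hb⟩ : ∃ b : ℕ → ℝ, b = fun m => (-1 : ℝ) ^ m *
    ∑ i ∈ Finset.range (m + 1), (-1 : ℝ) ^ i * taylorCoef k i := ⟨_, rfl⟩
  have ha : ∀ j, aCoef k j = b (k - 1 - j) := by
    intro j
    simp only [hb, aCoef, taylorCoef, mul_div_assoc]
  have hb0 : b 0 = taylorCoef k 0 := by simp [hb]
  have hbs : ∀ m, b (m + 1) = taylorCoef k (m + 1) - b m := by
    intro m
    have : ((-1 : ℝ) ^ m) * (-1) ^ m = 1 := by rw [← mul_pow]; simp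
    simp only [hb]
    rw [Finset.sum_range_succ _ (m + 1)]
    simp only [pow_succ]
    linear_combination taylorCoef k (m + 1) * this
  have key : ∀ n, (1 + w) * ∑ m ∈ Finset.range (n + 1), (b m : ℂ) * w ^ m =
      ∑ i ∈ Finset.range (n + 1), (taylorCoef k i : ℂ) * w ^ i + b n * w ^ (n + 1) := by
    intro n
    induction n with
    | zero => simp [hb0]; ring
    | succ n ih =>
      rw [Finset.sum_range_succ, mul_add, ih, Finset.sum_range_succ _ (n + 1), hbs]
      push_cast
      ring
  obtain ⟨n, rfl⟩ : ∃ n, k = n + 1 := ⟨k - 1, by omega⟩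
  have hsum : ∑ j ∈ Finset.range (n + 1), (aCoef (n + 1) j : ℂ) / w ^ (j + 1) =
      (∑ m ∈ Finset.range (n + 1), (b m : ℂ) * w ^ m) / w ^ (n + 1) := by
    rw [← Finset.sum_range_reflect, Finset.sum_div]
    refine Finset.sum_congr rfl fun j hj => ?_
    have hj' : j ≤ n := by simpa [Nat.lt_succ_iff] using hj
    rw [ha, show n + 1 - 1 - (n + 1 - 1 - j) = j by omega,
      show n + 1 - 1 - j + 1 = n + 1 - j by omega, pow_sub₀ _ hw (by omega)]
    field_simp
  rw [hsum, ← mul_div_assoc, key, add_div, ha]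
  have := pow_ne_zero (n + 1) hw
  simp only [Nat.add_sub_cancel, Nat.sub_zero]
  rw [mul_div_cancel_right₀ _ this]

lemma ell_zero (k : ℕ) (hk : 0 < k) : ell k 0 = taylorCoef k k - aCoef k 0 := by
  obtain ⟨n, rfl⟩ : ∃ n, k = n + 1 := ⟨k - 1, by omega⟩
  have h : ((-1 : ℝ) ^ n) * (-1) ^ n = 1 := by rw [← mul_pow]; simp
  simp only [ell, aCoef, taylorCoef]
  norm_num
  rw [Finset.sum_range_succ _ (n + 1)]
  simp only [pow_succ]
  linear_combination lam (n + 1) (n + 1) / (n + 1).factorial * h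

lemma ell_succ (k n : ℕ) : (-1 : ℝ) ^ (n + 1) * ell k ((n + 1 : ℕ) : ℤ) =
    ∑ j ∈ Finset.range (n + 1), (n.choose j : ℝ) * taylorCoef k (j + 1 + k) := by
  have h : ((-1 : ℝ) ^ (n + 1)) * (-1) ^ (n + 1) = 1 := by rw [← mul_pow]; simp
  rw [ell, if_pos (by push_cast; omega), Int.toNat_natCast, ← mul_assoc, h, one_mul,
    ← Finset.Ico_succ_right_eq_Icc, Finset.sum_Ico_eq_sum_range]
  refine Finset.sum_congr (by simp) fun j _ => ?_
  rw [show 1 + j = j + 1 by omega]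
  simp [taylorCoef, mul_div_assoc]

/-- Substituting `w = z / (1 - z)` into a power series, as an absolutely convergent series. -/
lemma hasSum_comp_div_one_sub {d : ℕ → ℂ} {z : ℂ} (hz : ‖z‖ < 1)
    (hd : ∀ w : ℂ, Summable fun j => d j * w ^ j) :
    (Summable fun n : ℕ => ‖(∑ j ∈ Finset.range (n + 1), (n.choose j : ℂ) * d j) * z ^ n‖) ∧
    HasSum (fun n : ℕ => (∑ j ∈ Finset.range (n + 1), (n.choose j : ℂ) * d j) * z ^ n)
      (∑' j, d j * z ^ j / (1 - z) ^ (j + 1)) := by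
  set f : ℕ × ℕ → ℂ := fun p => d p.1 * ((p.2 + p.1).choose p.1 : ℂ) * z ^ (p.1 + p.2) with hf
  have hz' : ‖(‖z‖ : ℝ)‖ < 1 := by simpa using hz
  have hpos : 0 < 1 - ‖z‖ := by linarith
  have hrow : ∀ j, HasSum (fun m => f (j, m)) (d j * z ^ j / (1 - z) ^ (j + 1)) := by
    intro j
    have h := (hasSum_choose_mul_geometric_of_norm_lt_one j hz).mul_left (d j * z ^ j)
    rw [mul_one_div] at h
    refine h.congr_fun fun m => ?_
    simp only [hf, pow_add]
    ring
  have hrow' : ∀ j, HasSum (fun m => ‖f (j, m)‖) (‖d j‖ * ‖z‖ ^ j / (1 - ‖z‖) ^ (j + 1)) := by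
    intro j
    have h := (hasSum_choose_mul_geometric_of_norm_lt_one j hz').mul_left (‖d j‖ * ‖z‖ ^ j)
    rw [mul_one_div] at h
    refine h.congr_fun fun m => ?_
    simp only [hf, pow_add, norm_mul, norm_pow, Complex.norm_natCast]
    ring
  have hfs : Summable fun p => ‖f p‖ := by
    refine (summable_prod_of_nonneg fun _ => norm_nonneg _).2 ⟨fun j => (hrow' j).summable, ?_⟩
    simp_rw [fun j => (hrow' j).tsum_eq]
    refine ((hd ((‖z‖ / (1 - ‖z‖) : ℝ) : ℂ)).norm.mul_right (1 - ‖z‖)⁻¹).congr fun j => ?_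
    rw [norm_mul, norm_pow, Complex.norm_real, Real.norm_of_nonneg (by positivity), div_pow, pow_succ]
    field_simp
  have hcol : ∀ n, ∑ p ∈ Finset.HasAntidiagonal.antidiagonal n, f p =
      (∑ j ∈ Finset.range (n + 1), (n.choose j : ℂ) * d j) * z ^ n := by
    intro n
    rw [Finset.Nat.sum_antidiagonal_eq_sum_range_succ_mk, Finset.sum_mul]
    refine Finset.sum_congr rfl fun j hj => ?_
    have hj' : j ≤ n := by simpa [Nat.lt_succ_iff] using hj
    simp only [hf]
    rw [Nat.sub_add_cancel hj', Nat.add_sub_cancel' hj']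
    ring
  constructor
  · have h1 := (Finset.HasAntidiagonal.sigmaAntidiagonalEquivProd (A := ℕ)).summable_iff.2 hfs
    refine Summable.of_nonneg_of_le (fun _ => norm_nonneg _) (fun n => ?_) h1.sigma
    rw [← hcol, tsum_fintype]
    refine (norm_sum_le _ _).trans (le_of_eq ?_)
    exact (Finset.sum_coe_sort (Finset.HasAntidiagonal.antidiagonal n) fun p => ‖f p‖).symm
  · have h1 := hfs.of_norm.hasSum
    have h2 : ∑' p, f p = ∑' j, d j * z ^ j / (1 - z) ^ (j + 1) :=
      (h1.prod_fiberwise hrow).tsum_eq.symm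
    rw [h2] at h1
    have h3 := ((Finset.HasAntidiagonal.sigmaAntidiagonalEquivProd (A := ℕ)).hasSum_iff.2 h1).sigma
      (fun n => hasSum_fintype _)
    refine h3.congr_fun ?_
    intro n
    rw [← hcol]
    exact (Finset.sum_coe_sort (Finset.HasAntidiagonal.antidiagonal n) f).symm

lemma LSeriesHasSum_dk (k : ℕ) (hk : 0 < k) {s : ℂ} (hs : 1 < s.re) :
    LSeriesHasSum (fun n => (dk k n : ℂ)) s (riemannZeta s ^ k) := by
  induction k, hk using Nat.le_induction with
  | base => simpa [dk] using ArithmeticFunction.LSeriesHasSum_zeta hs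
  | succ k hk ih =>
    have h := LSeriesHasSum.convolution ih (ArithmeticFunction.LSeriesHasSum_zeta hs)
    rw [← pow_succ] at h
    convert h using 1
    funext n
    simp [LSeries.convolution_def, dk, pow_succ, ArithmeticFunction.mul_apply]

lemma sum_dk_isBigO (k : ℕ) (hk : 0 < k) {r : ℝ} (hr : 1 < r) :
    (fun n : ℕ => ∑ i ∈ Finset.Icc 1 n, (dk k i : ℝ)) =O[atTop] fun n : ℕ => (n : ℝ) ^ r := by
  have hsum := (LSeriesHasSum_dk k hk (s := (r : ℂ)) (by simpa using hr)).LSeriesSummable.norm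
  refine IsBigO.of_bound (∑' n, ‖LSeries.term (fun n => (dk k n : ℂ)) (r : ℂ) n‖)
    (Eventually.of_forall fun n => ?_)
  rw [Real.norm_of_nonneg (Finset.sum_nonneg fun _ _ => Nat.cast_nonneg _),
    Real.norm_of_nonneg (by positivity)]
  calc ∑ i ∈ Finset.Icc 1 n, (dk k i : ℝ)
      ≤ ∑ i ∈ Finset.Icc 1 n,
          ‖LSeries.term (fun n => (dk k n : ℂ)) (r : ℂ) i‖ * (n : ℝ) ^ r := by
        refine Finset.sum_le_sum fun i hi => ?_
        obtain ⟨hi1, hin⟩ := Finset.mem_Icc.1 hi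
        have hi0 : (0 : ℝ) < i := by exact_mod_cast hi1
        have hle : (i : ℝ) ^ r ≤ (n : ℝ) ^ r :=
          Real.rpow_le_rpow hi0.le (by exact_mod_cast hin) (by linarith)
        rw [LSeries.norm_term_eq, if_neg (by omega), Complex.ofReal_re, Complex.norm_natCast,
          div_mul_eq_mul_div, le_div_iff₀ (Real.rpow_pos_of_pos hi0 r)]
        exact mul_le_mul_of_nonneg_left hle (Nat.cast_nonneg _)
    _ ≤ _ := by
        rw [← Finset.sum_mul]
        exact mul_le_mul_of_nonneg_right
          (hsum.sum_le_tsum _ fun _ _ => norm_nonneg _) (by positivity)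

lemma integrableOn_sum_dk (k : ℕ) (hk : 0 < k) {s : ℂ} (hs : 1 < s.re) :
    IntegrableOn (fun t : ℝ => (∑ i ∈ Finset.Icc 1 ⌊t⌋₊, (dk k i : ℂ)) * (t : ℂ) ^ (-s - 1))
      (Set.Ioi 1) := by
  obtain ⟨r, hr, hrs⟩ := exists_between hs
  refine IntegrableOn.mono_set ?_ Set.Ioi_subset_Ici_self
  have h₁ : LocallyIntegrableOn
      (fun t : ℝ => (∑ i ∈ Finset.Icc 1 ⌊t⌋₊, (dk k i : ℂ)) * (t : ℂ) ^ (-s - 1))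
      (Set.Ici 1) := by
    simp_rw [mul_comm]
    refine locallyIntegrableOn_mul_sum_Icc _ zero_le_one ?_
    refine ContinuousOn.locallyIntegrableOn (fun t ht => ?_) measurableSet_Ici
    exact (continuousAt_ofReal_cpow_const _ _ <|
      Or.inr (zero_lt_one.trans_le ht).ne').continuousWithinAt
  have h₂ : (fun t : ℝ => ∑ i ∈ Finset.Icc 1 ⌊t⌋₊, (dk k i : ℂ)) =O[atTop] fun t => t ^ r := by
    have h := (sum_dk_isBigO k hk hr).comp_tendsto (tendsto_nat_floor_atTop (α := ℝ))
    have h' : (fun t : ℝ => ∑ i ∈ Finset.Icc 1 ⌊t⌋₊, (dk k i : ℂ)) =O[atTop]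
        fun t : ℝ => (⌊t⌋₊ : ℝ) ^ r := by
      refine (IsBigO.of_norm_left ?_)
      refine h.norm_left.congr_left fun t => ?_
      simp only [Function.comp]
      rw [← Complex.norm_real]
      push_cast
      rfl
    refine h'.trans (IsBigO.of_bound 1 ?_)
    filter_upwards [eventually_ge_atTop 0] with t ht
    rw [Real.norm_of_nonneg (by positivity), Real.norm_of_nonneg (by positivity), one_mul]
    exact Real.rpow_le_rpow (by positivity) (Nat.floor_le ht) (by linarith)
  refine h₁.integrableOn_of_isBigO_atTop (g := fun t => t ^ (r - s.re - 1)) ?_ ?_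
  · refine IsBigO.mul_atTop_rpow_of_isBigO_rpow r (-s.re - 1) _ h₂ ?_ (by linarith)
    simpa using (norm_ofReal_cpow_eventually_eq_atTop (-s - 1)).isBigO.of_norm_left
  · rw [integrableAtFilter_rpow_atTop_iff]
    linarith

lemma integral_sum_dk (k : ℕ) (hk : 0 < k) {s : ℂ} (hs : 1 < s.re) :
    riemannZeta s ^ k =
      s * ∫ t in Set.Ioi (1 : ℝ),
        (∑ i ∈ Finset.Icc 1 ⌊t⌋₊, (dk k i : ℂ)) * (t : ℂ) ^ (-s - 1) := by
  obtain ⟨r, hr, hrs⟩ := exists_between hs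
  have h := LSeries_eq_mul_integral_of_nonneg (fun n => (dk k n : ℝ)) (by linarith) hrs
    (sum_dk_isBigO k hk hr) fun n => Nat.cast_nonneg _
  simp only [Complex.ofReal_natCast, neg_add'] at h
  rw [← h, (LSeriesHasSum_dk k hk hs).LSeries_eq]

lemma log_pow_mul_cpow_isBigO (j : ℕ) {ε : ℝ} (hε : 0 < ε) (a : ℂ) :
    (fun x : ℝ => (Real.log x : ℂ) ^ j * (x : ℂ) ^ a) =O[atTop] fun x => x ^ (ε + a.re) := by
  refine IsBigO.mul_atTop_rpow_of_isBigO_rpow ε a.re _ ?_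
    (norm_ofReal_cpow_eventually_eq_atTop a).isBigO.of_norm_left le_rfl
  have h := (isLittleO_log_rpow_rpow_atTop (j : ℝ) hε).isBigO
  refine IsBigO.of_norm_left (h.norm_left.congr_left fun x => ?_)
  rw [Real.rpow_natCast, ← Complex.ofReal_pow, Complex.norm_real]

lemma integrableOn_log_pow_mul_cpow (j : ℕ) {s : ℂ} (hs : 1 < s.re) :
    IntegrableOn (fun x : ℝ => (Real.log x : ℂ) ^ j * (x : ℂ) ^ (-s)) (Set.Ioi 1) := by
  refine IntegrableOn.mono_set ?_ Set.Ioi_subset_Ici_self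
  have hc : ContinuousOn (fun x : ℝ => (Real.log x : ℂ) ^ j * (x : ℂ) ^ (-s)) (Set.Ici 1) := by
    intro x hx
    have hx0 : x ≠ 0 := (zero_lt_one.trans_le hx).ne'
    refine ContinuousAt.continuousWithinAt (ContinuousAt.mul ?_
      (continuousAt_ofReal_cpow_const _ _ (Or.inr hx0)))
    exact (Complex.continuous_ofReal.continuousAt.comp (Real.continuousAt_log hx0)).pow j
  refine (hc.locallyIntegrableOn measurableSet_Ici).integrableOn_of_isBigO_atTop
    (log_pow_mul_cpow_isBigO j (ε := (s.re - 1) / 2) (by linarith) (-s)) ?_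
  rw [integrableAtFilter_rpow_atTop_iff, Complex.neg_re]
  linarith

lemma integral_log_pow_mul_cpow (j : ℕ) {s : ℂ} (hs : 1 < s.re) :
    ∫ x in Set.Ioi (1 : ℝ), (Real.log x : ℂ) ^ j * (x : ℂ) ^ (-s) =
      j.factorial / (s - 1) ^ (j + 1) := by
  have hs1 : s - 1 ≠ 0 := by
    intro h
    have := congrArg Complex.re h
    simp at this
    linarith
  induction j with
  | zero =>
    have h := integral_Ioi_cpow_of_lt (a := -s) (by simpa using hs) zero_lt_one
    simp only [pow_zero, one_mul, h, Complex.ofReal_one, Complex.one_cpow, Nat.factorial_zero,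
      Nat.cast_one, zero_add, pow_one]
    rw [← neg_div_neg_eq]
    congr 1 <;> ring
  | succ j ih =>
    have hderiv : ∀ x ∈ Set.Ici (1 : ℝ),
        HasDerivAt (fun x : ℝ => (Real.log x : ℂ) ^ (j + 1) * (x : ℂ) ^ (1 - s))
          ((j + 1 : ℂ) * ((Real.log x : ℂ) ^ j * (x : ℂ) ^ (-s)) +
            (1 - s) * ((Real.log x : ℂ) ^ (j + 1) * (x : ℂ) ^ (-s))) x := by
      intro x hx
      have hx0 : x ≠ 0 := (zero_lt_one.trans_le hx).ne'
      have hx0' : (x : ℂ) ≠ 0 := by exact_mod_cast hx0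
      have h1 := ((Real.hasDerivAt_log hx0).ofReal_comp).pow (j + 1)
      have h2 : HasDerivAt (fun x : ℝ => (x : ℂ) ^ (1 - s)) ((1 - s) * (x : ℂ) ^ (-s)) x := by
        have h := hasDerivAt_ofReal_cpow_const (r := 1 - s) hx0
          fun h => hs1 (by linear_combination -h)
        rwa [sub_sub_cancel_left] at h
      refine (h1.mul h2).congr_deriv ?_
      simp only [Nat.add_sub_cancel, Pi.pow_apply]
      rw [show (1 - s) = -s + 1 by ring, Complex.cpow_add _ _ hx0', Complex.cpow_one]
      push_cast
      field_simp
    have hint := ((integrableOn_log_pow_mul_cpow j hs).const_mul (j + 1 : ℂ)).add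
      ((integrableOn_log_pow_mul_cpow (j + 1) hs).const_mul (1 - s))
    have hlim : Tendsto (fun x : ℝ => (Real.log x : ℂ) ^ (j + 1) * (x : ℂ) ^ (1 - s)) atTop
        (𝓝 0) := by
      refine (log_pow_mul_cpow_isBigO (j + 1) (ε := (s.re - 1) / 2) (by linarith)
        (1 - s)).trans_tendsto ?_
      have := tendsto_rpow_neg_atTop (y := (s.re - 1) / 2) (by linarith)
      convert this using 3
      simp only [Complex.sub_re, Complex.one_re]
      ring
    have h := integral_Ioi_of_hasDerivAt_of_tendsto' hderiv hint hlim
    rw [integral_add ((integrableOn_log_pow_mul_cpow j hs).const_mul (j + 1 : ℂ))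
      ((integrableOn_log_pow_mul_cpow (j + 1) hs).const_mul (1 - s)),
      integral_const_mul, integral_const_mul, ih] at h
    simp only [Real.log_one, Complex.ofReal_zero, ne_eq, Nat.add_eq_zero_iff, one_ne_zero,
      and_false, not_false_eq_true, zero_pow, zero_mul, sub_zero] at h
    rw [Nat.factorial_succ, eq_div_iff (pow_ne_zero _ hs1), pow_succ]
    push_cast
    have hp := pow_ne_zero (j + 1) hs1
    field_simp at h
    linear_combination -h

lemma Deltak_mul_cpow (k : ℕ) (s : ℂ) {x : ℝ} (hx : x ∈ Set.Ioi (1 : ℝ)) :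
    (Deltak k x : ℂ) * (x : ℂ) ^ (-s - 1) =
      (∑ i ∈ Finset.Icc 1 ⌊x⌋₊, (dk k i : ℂ)) * (x : ℂ) ^ (-s - 1) -
      ∑ j ∈ Finset.range k, (aCoef k j / j.factorial : ℂ) *
        ((Real.log x : ℂ) ^ j * (x : ℂ) ^ (-s)) := by
  have hx0 : (x : ℂ) ≠ 0 := by exact_mod_cast (zero_lt_one.trans hx).ne'
  have h : ∑ j ∈ Finset.range k, (aCoef k j / j.factorial : ℂ) *
        ((Real.log x : ℂ) ^ j * (x : ℂ) ^ (-s)) =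
      x * (∑ j ∈ Finset.range k, (aCoef k j / j.factorial : ℂ) * (Real.log x : ℂ) ^ j) *
        (x : ℂ) ^ (-s - 1) := by
    rw [Complex.cpow_sub _ _ hx0, Complex.cpow_one, mul_comm (x : ℂ), mul_assoc,
      mul_div_cancel₀ _ hx0, Finset.sum_mul]
    exact Finset.sum_congr rfl fun j _ => by ring
  rw [h, ← sub_mul, Deltak]
  push_cast
  rfl

lemma integrableOn_Deltak (k : ℕ) (hk : 0 < k) {s : ℂ} (hs : 1 < s.re) :
    IntegrableOn (fun x : ℝ => (Deltak k x : ℂ) * (x : ℂ) ^ (-s - 1)) (Set.Ioi 1) := by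
  refine IntegrableOn.congr_fun ((integrableOn_sum_dk k hk hs).sub
    (integrable_finsetSum _ fun j _ => (integrableOn_log_pow_mul_cpow j hs).const_mul
      (aCoef k j / j.factorial : ℂ)))
    (fun x hx => (Deltak_mul_cpow k s hx).symm) measurableSet_Ioi

lemma zeta_pow_eq (k : ℕ) (hk : 0 < k) {s : ℂ} (hs : 1 < s.re) :
    riemannZeta s ^ k =
      s * (∑ j ∈ Finset.range k, (aCoef k j : ℂ) / (s - 1) ^ (j + 1)) +
        s * ∫ x in Set.Ioi (1 : ℝ), (Deltak k x : ℂ) * (x : ℂ) ^ (-s - 1) := by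
  have hj : ∀ j ∈ Finset.range k, IntegrableOn (fun x : ℝ => (aCoef k j / j.factorial : ℂ) *
        ((Real.log x : ℂ) ^ j * (x : ℂ) ^ (-s))) (Set.Ioi 1) := fun j _ =>
    (integrableOn_log_pow_mul_cpow j hs).const_mul _
  rw [setIntegral_congr_fun measurableSet_Ioi fun x hx => Deltak_mul_cpow k s hx,
    integral_sub (integrableOn_sum_dk k hk hs) (integrable_finsetSum _ hj),
    integral_finsetSum _ hj, mul_sub, ← integral_sum_dk k hk hs]
  simp_rw [integral_const_mul, integral_log_pow_mul_cpow _ hs]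
  have : ∀ j, (aCoef k j / j.factorial : ℂ) * (j.factorial / (s - 1) ^ (j + 1)) =
      aCoef k j / (s - 1) ^ (j + 1) := by
    intro j
    have : (j.factorial : ℂ) ≠ 0 := by exact_mod_cast j.factorial_ne_zero
    field_simp
  simp_rw [this]
  ring

lemma norm_sub_one_div_self_lt_one {s : ℂ} (hs : 1 / 2 < s.re) : ‖(s - 1) / s‖ < 1 := by
  have hs0 : s ≠ 0 := by
    rintro rfl
    norm_num at hs
  rw [norm_div, div_lt_one (norm_pos_iff.2 hs0), ← sq_lt_sq₀ (norm_nonneg _) (norm_nonneg _),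
    Complex.sq_norm, Complex.sq_norm, Complex.normSq_apply, Complex.normSq_apply]
  simp only [Complex.sub_re, Complex.sub_im, Complex.one_re, Complex.one_im]
  nlinarith

lemma ell_series (k : ℕ) (hk : 0 < k) {s : ℂ} (hs : 1 / 2 < s.re) :
    (Summable fun n : ℕ => ‖(-1 : ℂ) ^ n * (ell k n : ℂ) * ((s - 1) / s) ^ n‖) ∧
    ∑' n : ℕ, (-1 : ℂ) ^ n * (ell k n : ℂ) * ((s - 1) / s) ^ n =
      ∑' j : ℕ, (taylorCoef k (j + k) : ℂ) * (s - 1) ^ j - aCoef k 0 := by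
  have hs0 : s ≠ 0 := by
    rintro rfl
    norm_num at hs
  set z := (s - 1) / s with hz
  have hd : ∀ w : ℂ, Summable fun j : ℕ => (taylorCoef k (j + 1 + k) : ℂ) * w ^ j := by
    intro w
    simpa only [add_assoc] using summable_taylorCoef_add k (1 + k) w
  obtain ⟨h1, h2⟩ := hasSum_comp_div_one_sub (z := z) (norm_sub_one_div_self_lt_one hs) hd
  have hterm : ∀ n : ℕ, (-1 : ℂ) ^ (n + 1) * (ell k ((n + 1 : ℕ) : ℤ) : ℂ) * z ^ (n + 1) =
      (∑ j ∈ Finset.range (n + 1), (n.choose j : ℂ) * (taylorCoef k (j + 1 + k) : ℂ)) * z ^ n * z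
      := by
    intro n
    have h := congrArg (fun x : ℝ => (x : ℂ)) (ell_succ k n)
    push_cast at h ⊢
    rw [h, pow_succ, mul_assoc]
  have hsum : Summable fun n : ℕ => ‖(-1 : ℂ) ^ n * (ell k n : ℂ) * z ^ n‖ := by
    rw [← summable_nat_add_iff 1]
    refine (h1.mul_right ‖z‖).congr fun n => ?_
    rw [hterm, norm_mul _ z]
  refine ⟨hsum, ?_⟩
  rw [hsum.of_norm.tsum_eq_zero_add, (summable_taylorCoef_add k k (s - 1)).tsum_eq_zero_add]
  simp_rw [hterm]
  rw [tsum_mul_right, h2.tsum_eq, ← tsum_mul_right]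
  have hone : 1 - z = s⁻¹ := by
    rw [hz]
    field_simp
    ring
  have hj : ∀ j : ℕ, (taylorCoef k (j + 1 + k) : ℂ) * z ^ j / (1 - z) ^ (j + 1) * z =
      taylorCoef k (j + 1 + k) * (s - 1) ^ (j + 1) := by
    intro j
    have hzs : z * s = s - 1 := by
      rw [hz]
      field_simp
    rw [hone, inv_pow, div_inv_eq_mul, ← hzs, mul_pow, pow_succ z]
    ring
  simp_rw [hj]
  simp only [pow_zero, Nat.cast_zero, ell_zero k hk, one_mul, mul_one, zero_add]
  push_cast
  ring

lemma differentiable_tsum_taylorCoef (k : ℕ) :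
    Differentiable ℂ fun s : ℂ => ∑' j : ℕ, (taylorCoef k (j + k) : ℂ) * (s - 1) ^ j := by
  intro s
  have h : DifferentiableOn ℂ
      (fun s : ℂ => ∑' j : ℕ, (taylorCoef k (j + k) : ℂ) * (s - 1) ^ j)
      (Metric.ball 1 (‖s - 1‖ + 1)) := by
    refine differentiableOn_tsum_of_summable_norm
      (summable_taylorCoef_add k k ((‖s - 1‖ + 1 : ℝ) : ℂ)).norm
      (fun j => by fun_prop) Metric.isOpen_ball fun j w hw => ?_
    rw [norm_mul, norm_mul, norm_pow, norm_pow, Complex.norm_real (‖s - 1‖ + 1),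
      Real.norm_of_nonneg (by positivity)]
    have hw' : ‖w - 1‖ ≤ ‖s - 1‖ + 1 := by
      simpa [dist_eq_norm] using (Metric.mem_ball.1 hw).le
    gcongr
  refine (h s ?_).differentiableAt (Metric.isOpen_ball.mem_nhds ?_) <;>
    simp [dist_eq_norm]

lemma zeta_pow_eq_taylor (k : ℕ) {s : ℂ} (hs : s - 1 ≠ 0) :
    riemannZeta s ^ k =
      (∑ i ∈ Finset.range k, (taylorCoef k i : ℂ) * (s - 1) ^ i) / (s - 1) ^ k +
        ∑' j : ℕ, (taylorCoef k (j + k) : ℂ) * (s - 1) ^ j := by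
  have h := hasSum_taylorCoef k (s - 1)
  have h1 := h.summable.sum_add_tsum_nat_add k
  have hw := pow_ne_zero k hs
  rw [h.tsum_eq, add_sub_cancel, zetaPowAux, Function.update_of_ne (sub_ne_zero.1 hs),
    mul_pow] at h1
  simp_rw [pow_add, ← mul_assoc] at h1
  rw [tsum_mul_right] at h1
  field_simp
  linear_combination -h1

theorem stmt19 (k : ℕ) (hk : 0 < k) :
    (∀ s : ℂ, 1 < s.re →
      IntegrableOn (fun x : ℝ => (Deltak k x : ℂ) * (x : ℂ) ^ (-s - 1)) (Set.Ioi 1) ∧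
      riemannZeta s ^ k =
        s * (∑ j ∈ Finset.range k, (aCoef k j : ℂ) / (s - 1) ^ (j + 1)) +
          s * ∫ x in Set.Ioi (1 : ℝ), (Deltak k x : ℂ) * (x : ℂ) ^ (-s - 1)) ∧
    (∀ s : ℂ, 1 / 2 < s.re →
      Summable fun n : ℕ => ‖(-1 : ℂ) ^ n * (ell k n : ℂ) * ((s - 1) / s) ^ n‖) ∧
    DifferentiableOn ℂ
      (fun s : ℂ => ∑' n : ℕ, (-1 : ℂ) ^ n * (ell k n : ℂ) * ((s - 1) / s) ^ n)
      {s : ℂ | 1 / 2 < s.re} ∧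
    (∀ s : ℂ, 1 < s.re →
      ∑' n : ℕ, (-1 : ℂ) ^ n * (ell k n : ℂ) * ((s - 1) / s) ^ n =
        s * ∫ x in Set.Ioi (1 : ℝ), (Deltak k x : ℂ) * (x : ℂ) ^ (-s - 1)) := by
  have hne : ∀ s : ℂ, 1 < s.re → s - 1 ≠ 0 := by
    intro s hs h
    rw [sub_eq_zero.1 h, Complex.one_re] at hs
    exact lt_irrefl _ hs
  refine ⟨fun s hs => ⟨integrableOn_Deltak k hk hs, zeta_pow_eq k hk hs⟩,
    fun s hs => (ell_series k hk hs).1, ?_, fun s hs => ?_⟩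
  · exact ((differentiable_tsum_taylorCoef k).sub_const (aCoef k 0 : ℂ)).differentiableOn.congr
      fun s hs => (ell_series k hk hs).2
  · have h1 := sum_aCoef k hk (s - 1) (hne s hs)
    rw [add_sub_cancel] at h1
    rw [(ell_series k hk (by linarith)).2]
    linear_combination zeta_pow_eq k hk hs - zeta_pow_eq_taylor k (hne s hs) + h1
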